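/- arXiv:math/0108155 — 2 statements merged into one kernel-verified Lean document; each statement's English description precedes it below -/
import Mathlib

section
/- There is an absolute constant C > 0 such that for all integers N ≥ 2, r(3, N) ≥ N · exp(−C · √(log N)). -/
/-!
Mathlib's `Behrend.roth_lower_bound` gives Behrend's bound, with constant `4`, for `rothNumberNat N`,
the maximal size of a subset of `{0, …, N - 1}` free of solutions to `a + c = b + b` with `a ≠ b`.
Shifting an extremal set by `1` places it inside `{1, …, N}`, and a progression `x, x + y, x + 2y`
with `y ≠ 0` in the shifted set would give such a solution in the original one. Hence
`rothNumberNat N ≤ rAP 3 N`.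
-/


/-- `rAP k N` is the maximal cardinality of a subset `A` of `{1,…,N}` containing no
arithmetic progression `{x + j*y : 0 ≤ j < k}` with `y ≠ 0`. -/
noncomputable def rAP (k N : ℕ) : ℕ :=
  sSup {s : ℕ | ∃ A : Finset ℤ,
    (∀ a ∈ A, 1 ≤ a ∧ a ≤ (N : ℤ)) ∧
    (¬ ∃ x y : ℤ, y ≠ 0 ∧ ∀ j : ℕ, j < k → x + (j : ℤ) * y ∈ A) ∧
    A.card = s}

theorem rothNumberNat_le_rAP_three (N : ℕ) : rothNumberNat N ≤ rAP 3 N := by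
  obtain ⟨t, ht, hcard, hfree⟩ := rothNumberNat_spec N
  -- `sSup` on `ℕ` is `0` on unbounded sets, so boundedness of the set of sizes has to be checked.
  refine le_csSup ⟨N, ?_⟩ ⟨t.image (fun n : ℕ => (n : ℤ) + 1), ?_, ?_, ?_⟩
  · rintro s ⟨A, hA, -, rfl⟩
    have hsub : A ⊆ Finset.Icc 1 (N : ℤ) := fun a ha => Finset.mem_Icc.2 (hA a ha)
    simpa using Finset.card_le_card hsub
  · intro a ha
    obtain ⟨n, hn, rfl⟩ := Finset.mem_image.1 ha
    have := Finset.mem_range.1 (ht hn)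
    omega
  · rintro ⟨x, y, hy, h⟩
    obtain ⟨a, ha, hax⟩ := Finset.mem_image.1 (h 0 (by norm_num))
    obtain ⟨b, hb, hbx⟩ := Finset.mem_image.1 (h 1 (by norm_num))
    obtain ⟨c, hc, hcx⟩ := Finset.mem_image.1 (h 2 (by norm_num))
    push_cast at hax hbx hcx
    have hab : a = b := hfree ha hb hc (by omega)
    omega
  · rw [Finset.card_image_of_injective _ (fun m n hmn => by simpa using hmn), hcard]

theorem behrend_three_term :
    ∃ C : ℝ, 0 < C ∧ ∀ N : ℕ, 2 ≤ N →
      (N : ℝ) * Real.exp (-C * Real.sqrt (Real.log N)) ≤ (rAP 3 N : ℝ) := by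
  refine ⟨4, by norm_num, fun N _ => ?_⟩
  exact Behrend.roth_lower_bound.trans (by exact_mod_cast rothNumberNat_le_rAP_three N)
end

section
/- Let n ≥ 2 and d ≥ 1 be integers and let x^(1),...,x^(s) be integers each admitting a balanced base-n digit vector v_{x^(k)} ∈ ℤ^d (so x^(k) = Σ_{i=0}^{d−1} (v_{x^(k)})_i n^i with each digit in (−n/2, n/2]) whose entries are bounded in absolute value by an integer B_k. If a_1,...,a_s are integers with Σ_{k=1}^s |a_k| B_k < n/2, then the integer y = Σ_{k=1}^s a_k x^(k) admits a balanced base-n digit vector and v_y = Σ_{k=1}^s a_k v_{x^(k)} (componentwise). -/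
/-!
By the triangle inequality each combined digit has absolute value at most `∑ k, |a k| * B k`,
which is less than `n / 2`, so the combined vector is balanced. Evaluating a digit vector at the
base `n` is linear, so this vector represents `∑ k, a k * x k`.
-/

/-- `IsBalanced n d x v` means that `v` is a balanced base-`n` digit vector of `x` with `d`
digits: `x = ∑_{i<d} v i * n^i` with `-n/2 < v i ≤ n/2` for each `i`. -/
def IsBalanced (n : ℤ) (d : ℕ) (x : ℤ) (v : Fin d → ℤ) : Prop :=
  (∀ i, -n < 2 * v i ∧ 2 * v i ≤ n) ∧ x = ∑ i, v i * n ^ (i : ℕ)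

/-- Small integer linear combinations of integers with bounded balanced digit vectors again
have balanced digit vectors, obtained by taking the same linear combination of the digit
vectors componentwise. -/
theorem balanced_digits_linear_combination (n : ℤ) (d s : ℕ) (hn : 2 ≤ n) (hd : 1 ≤ d)
    (x a B : Fin s → ℤ) (v : Fin s → Fin d → ℤ)
    (hv : ∀ k, IsBalanced n d (x k) (v k))
    (hB : ∀ k i, |v k i| ≤ B k)
    (hsum : 2 * ∑ k, |a k| * B k < n) :
    IsBalanced n d (∑ k, a k * x k) (fun i => ∑ k, a k * v k i) := by
  refine ⟨fun i => ?_, ?_⟩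
  · have h : |∑ k, a k * v k i| ≤ ∑ k, |a k| * B k :=
      (Finset.abs_sum_le_sum_abs _ _).trans <| Finset.sum_le_sum fun k _ => by
        rw [abs_mul]
        exact mul_le_mul_of_nonneg_left (hB k i) (abs_nonneg _)
    have h' := abs_le.mp h
    constructor <;> linarith [h'.1, h'.2]
  · calc ∑ k, a k * x k = ∑ k, ∑ i, a k * v k i * n ^ (i : ℕ) :=
          Finset.sum_congr rfl fun k _ => by
            rw [(hv k).2, Finset.mul_sum]
            simp only [mul_assoc]
      _ = ∑ i, (∑ k, a k * v k i) * n ^ (i : ℕ) := by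
          rw [Finset.sum_comm]
          simp only [Finset.sum_mul]
end
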